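/- Let P be a vector space partition of F_q^v of type d_l^{u_l}⋯d_2^{u_2}d_1^{u_1}, where u_1, u_2 > 0 and d_l > ⋯ > d_2 > d_1 ≥ 1. If q^{d_2−d_1} does not divide u_1 and d_2 ≥ 2d_1, then either d_1 divides d_2 and u_1 = (q^{d_2}−1)/(q^{d_1}−1), or u_1 > 2·q^{d_2−d_1}. -/

import Mathlib

/-! For a linear form `f ≠ 0`, a subspace `U` meets the affine hyperplane `f = 1` in
`q ^ (dim U - 1)` points if `U` is not contained in `ker f`, and in none otherwise. Adding up over a
vector space partition shows that `q ^ dim U`, summed over the members not contained in `ker f`,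
equals `q ^ v`. Reducing modulo `q ^ d₂`, one finds that `q ^ (d₂ - d₁)` divides the number of
`d₁`-dimensional members not contained in `ker f`.

If `u₁ < 2 * q ^ (d₂ - d₁)`, that number can only be `0` or `q ^ (d₂ - d₁)`, and it is `0` exactly
when `ker f` contains the span `W` of the `d₁`-dimensional members. Counting the pairs `(f, U)` with
`U` not contained in `ker f` then gives
`q ^ (dim W - d₁) * u₁ * (q ^ d₁ - 1) = q ^ (d₂ - d₁) * (q ^ dim W - 1)`.
As the `d₁`-dimensional members meet trivially inside `W`, also `u₁ * (q ^ d₁ - 1) ≤ q ^ dim W - 1`;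
comparing the powers of `q` forces `dim W = d₂`, so that these members partition `W`.
-/

open Module

theorem eq_of_pow_mul_eq_pow_mul_pow_sub_one {q w s r x : ℕ} (hq : 1 < q) (hw : w ≠ 0)
    (h : q ^ s * x = q ^ r * (q ^ w - 1)) (hx : x ≤ q ^ w - 1) : s = r ∧ x = q ^ w - 1 := by
  have hpos : 0 < q ^ w - 1 := Nat.sub_pos_of_lt (Nat.one_lt_pow hw hq)
  have hcop : Nat.Coprime (q ^ s) (q ^ w - 1) := by
    refine Nat.Coprime.pow_left s (Nat.Coprime.coprime_dvd_left (dvd_pow_self q hw) ?_)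
    exact (Nat.coprime_self_sub_right (Nat.one_le_pow _ _ (by omega))).2 (Nat.coprime_one_right _)
  have hsr : s ≤ r :=
    (Nat.pow_dvd_pow_iff_le_right hq).1 (hcop.dvd_of_dvd_mul_right (Dvd.intro _ h))
  have hrs : r ≤ s := by
    refine (Nat.pow_le_pow_iff_right hq).1 (Nat.le_of_mul_le_mul_right ?_ hpos)
    exact h ▸ Nat.mul_le_mul_left _ hx
  obtain rfl := hsr.antisymm hrs
  exact ⟨rfl, Nat.eq_of_mul_eq_mul_left (by positivity) h⟩

theorem dvd_of_pow_sub_one_dvd_pow_sub_one {q k w : ℕ} (hq : 1 < q)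
    (h : q ^ k - 1 ∣ q ^ w - 1) : k ∣ w := by
  have hgcd : q ^ k - 1 = q ^ k.gcd w - 1 := by
    rw [← Nat.pow_sub_one_gcd_pow_sub_one, Nat.gcd_eq_left h]
  have hpow : q ^ k = q ^ k.gcd w :=
    Nat.sub_one_cancel (by positivity) (by positivity) hgcd
  exact Nat.gcd_eq_left_iff_dvd.1 (Nat.pow_right_injective hq hpow).symm

section LinearForms

variable {F V : Type*} [Field F] [AddCommGroup V] [Module F V]

theorem ncard_coe_submodule [Finite F] (U : Submodule F V) [FiniteDimensional F U] :
    (U : Set V).ncard = Nat.card F ^ finrank F U :=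
  natCard_eq_pow_finrank

theorem natCard_mul_ncard_fiber [Finite F] [FiniteDimensional F V] {f : Dual F V} (hf : f ≠ 0)
    (c : F) : Nat.card F * (f ⁻¹' {c}).ncard = Nat.card F ^ finrank F V := by
  have hfiber : (f ⁻¹' {c}).ncard = (LinearMap.ker f : Set V).ncard := Nat.card_congr
    (f.toAddMonoidHom.fiberEquivKerOfSurjective (LinearMap.surjective_iff_ne_zero.2 hf) c)
  rw [hfiber, ncard_coe_submodule, ← pow_succ', Dual.finrank_ker_add_one_of_ne_zero hf]

theorem natCard_mul_ncard_inter_fiber [Finite F] {U : Submodule F V} [FiniteDimensional F U]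
    {f : Dual F V} (hU : ¬ U ≤ LinearMap.ker f) (c : F) :
    Nat.card F * (U ∩ f ⁻¹' {c} : Set V).ncard = Nat.card F ^ finrank F U := by
  have hf : f ∘ₗ U.subtype ≠ 0 := mt LinearMap.le_ker_iff_comp_subtype_eq_zero.2 hU
  rw [← natCard_mul_ncard_fiber hf c, ← Subtype.image_preimage_coe,
    Set.ncard_image_of_injective _ Subtype.val_injective]
  rfl

theorem ncard_dual_not_le_ker [Finite F] [FiniteDimensional F V] (U : Submodule F V) :
    {f : Dual F V | ¬ U ≤ LinearMap.ker f}.ncard =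
      Nat.card F ^ (finrank F V - finrank F U) * (Nat.card F ^ finrank F U - 1) := by
  have : Finite (Dual F V) := Module.finite_of_finite F
  have hcompl : {f : Dual F V | ¬ U ≤ LinearMap.ker f} =
      (U.dualAnnihilator : Set (Dual F V))ᶜ := by
    ext f
    simp [Submodule.mem_dualAnnihilator, SetLike.le_def]
  have hdim := Subspace.finrank_add_finrank_dualAnnihilator_eq U
  rw [hcompl, Set.ncard_compl, ncard_coe_submodule,
    natCard_eq_pow_finrank (K := F) (V := Dual F V), Subspace.dual_finrank_eq, ← hdim,
    Nat.add_sub_cancel_left, Nat.mul_sub_one, ← pow_add, add_comm (finrank F U)]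

theorem ncard_submodule_diff_zero [Finite F] (U : Submodule F V) [FiniteDimensional F U] :
    (U \ {0} : Set V).ncard = Nat.card F ^ finrank F U - 1 := by
  rw [Set.ncard_sdiff_singleton_of_mem U.zero_mem, ncard_coe_submodule]

theorem sum_pow_finrank_sub_one_le [Finite F] [FiniteDimensional F V]
    {N : Finset (Submodule F V)} (hN : (N : Set (Submodule F V)).PairwiseDisjoint id) :
    ∑ U ∈ N, (Nat.card F ^ finrank F U - 1) ≤ Nat.card F ^ finrank F ↥(N.sup id) - 1 := by
  have : Finite V := Module.finite_of_finite F
  have hdisj : (N : Set (Submodule F V)).PairwiseDisjoint fun U ↦ (U \ {0} : Set V) :=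
    fun U hU U' hU' hne ↦ Set.disjoint_left.2 fun x hx hx' ↦
      hx.2 (Submodule.disjoint_def.1 (hN hU hU' hne) x hx.1 hx'.1)
  calc ∑ U ∈ N, (Nat.card F ^ finrank F U - 1)
      = (⋃ U ∈ (N : Set (Submodule F V)), (U \ {0} : Set V)).ncard := by
        rw [N.finite_toSet.ncard_biUnion (fun _ _ ↦ Set.toFinite _) hdisj,
          finsum_mem_coe_finset]
        simp only [ncard_submodule_diff_zero]
    _ ≤ (↑(N.sup id) \ {0} : Set V).ncard :=
        Set.ncard_le_ncard (Set.iUnion₂_subset fun U hU ↦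
          Set.sdiff_subset_sdiff_left (Finset.le_sup (f := id) hU))
    _ = Nat.card F ^ finrank F ↥(N.sup id) - 1 := ncard_submodule_diff_zero _

theorem finrank_le_finrank_sup [FiniteDimensional F V] {N : Finset (Submodule F V)}
    {U : Submodule F V} (hU : U ∈ N) : finrank F U ≤ finrank F ↥(N.sup id) :=
  Submodule.finrank_mono (Finset.le_sup (f := id) hU)

open scoped Classical in
theorem sum_ncard_dual_not_le_ker [Finite F] [FiniteDimensional F V]
    {N : Finset (Submodule F V)} {m : ℕ}
    (hN : ∀ f : Dual F V, ¬ N.sup id ≤ LinearMap.ker f →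
      Finset.card {U ∈ N | ¬ U ≤ LinearMap.ker f} = m) :
    ∑ U ∈ N, {f : Dual F V | ¬ U ≤ LinearMap.ker f}.ncard =
      m * {f : Dual F V | ¬ N.sup id ≤ LinearMap.ker f}.ncard := by
  have : Finite (Dual F V) := Module.finite_of_finite F
  have := Fintype.ofFinite (Dual F V)
  have hzero (f : Dual F V) (hf : N.sup id ≤ LinearMap.ker f) :
      Finset.card {U ∈ N | ¬ U ≤ LinearMap.ker f} = 0 := by
    simpa [Finset.filter_eq_empty_iff] using hf
  have hcount := Finset.sum_card_bipartiteAbove_eq_sum_card_bipartiteBelow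
    (s := (Finset.univ : Finset (Dual F V))) (t := N) (fun f U ↦ ¬ U ≤ LinearMap.ker f)
  simp only [Set.ncard_eq_toFinset_card', Set.toFinset_ofPred]
  calc _ = ∑ f : Dual F V, Finset.card {U ∈ N | ¬ U ≤ LinearMap.ker f} := hcount.symm
    _ = ∑ f : Dual F V, if ¬ N.sup id ≤ LinearMap.ker f then m else 0 :=
        Finset.sum_congr rfl fun f _ ↦ by
          split_ifs with hf
          exacts [hzero f hf, hN f hf]
    _ = _ := by rw [← Finset.sum_filter, Finset.sum_const, smul_eq_mul, mul_comm]

open scoped Classical in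
theorem pow_mul_card_mul_eq_of_forall_dual [Finite F] [FiniteDimensional F V]
    {N : Finset (Submodule F V)} {k m : ℕ} (hk : ∀ U ∈ N, finrank F U = k)
    (hN : ∀ f : Dual F V, ¬ N.sup id ≤ LinearMap.ker f →
      Finset.card {U ∈ N | ¬ U ≤ LinearMap.ker f} = m) :
    Nat.card F ^ (finrank F ↥(N.sup id) - k) * (N.card * (Nat.card F ^ k - 1)) =
      m * (Nat.card F ^ finrank F ↥(N.sup id) - 1) := by
  obtain rfl | ⟨U₀, hU₀⟩ := N.eq_empty_or_nonempty
  · rw [Finset.sup_empty, finrank_bot]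
    simp
  have hkw : k ≤ finrank F ↥(N.sup id) := hk U₀ hU₀ ▸ finrank_le_finrank_sup hU₀
  have hwv : finrank F ↥(N.sup id) ≤ finrank F V := Submodule.finrank_le _
  have hcount := sum_ncard_dual_not_le_ker hN
  rw [Finset.sum_congr rfl fun U hU ↦ by rw [ncard_dual_not_le_ker, hk U hU], Finset.sum_const,
    smul_eq_mul, ncard_dual_not_le_ker, ← Nat.sub_add_sub_cancel hwv hkw, pow_add] at hcount
  refine Nat.eq_of_mul_eq_mul_left
    (pow_pos (Nat.card_pos (α := F)) (finrank F V - finrank F ↥(N.sup id))) ?_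
  linear_combination hcount

open scoped Classical in
theorem card_mul_pow_sub_one_eq_of_card_lt [Finite F] [FiniteDimensional F V]
    {N : Finset (Submodule F V)} {k r : ℕ} (hne : N.Nonempty) (hk0 : k ≠ 0)
    (hk : ∀ U ∈ N, finrank F U = k) (hdisj : (N : Set (Submodule F V)).PairwiseDisjoint id)
    (hdvd : ∀ f : Dual F V, Nat.card F ^ r ∣ Finset.card {U ∈ N | ¬ U ≤ LinearMap.ker f})
    (hlt : N.card < 2 * Nat.card F ^ r) :
    N.card * (Nat.card F ^ k - 1) = Nat.card F ^ (k + r) - 1 := by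
  obtain ⟨U₀, hU₀⟩ := hne
  have hkw : k ≤ finrank F ↥(N.sup id) := hk U₀ hU₀ ▸ finrank_le_finrank_sup hU₀
  have hcard (f : Dual F V) (hf : ¬ N.sup id ≤ LinearMap.ker f) :
      Finset.card {U ∈ N | ¬ U ≤ LinearMap.ker f} = Nat.card F ^ r := by
    have hpos : Finset.card {U ∈ N | ¬ U ≤ LinearMap.ker f} ≠ 0 := by
      simpa [Finset.filter_eq_empty_iff] using hf
    exact Nat.eq_of_dvd_of_lt_two_mul hpos (hdvd f) ((Finset.card_filter_le _ _).trans_lt hlt)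
  have hpack : N.card * (Nat.card F ^ k - 1) ≤ Nat.card F ^ finrank F ↥(N.sup id) - 1 := by
    have hsum := sum_pow_finrank_sub_one_le hdisj
    rwa [Finset.sum_congr rfl fun U hU ↦ by rw [hk U hU], Finset.sum_const, smul_eq_mul] at hsum
  obtain ⟨hr, hmul⟩ := eq_of_pow_mul_eq_pow_mul_pow_sub_one Finite.one_lt_card (by omega)
    (pow_mul_card_mul_eq_of_forall_dual hk hcard) hpack
  rwa [← hr, Nat.add_sub_cancel' hkw]

end LinearForms

section Partition

variable {F V : Type*} [Field F] [AddCommGroup V] [Module F V] {P : Finset (Submodule F V)}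

/-- A finite set of nonzero subspaces is a vector space partition if every nonzero vector lies in
exactly one of them. -/
structure IsVectorSpacePartition (P : Finset (Submodule F V)) : Prop where
  bot_notMem : ⊥ ∉ P
  existsUnique_mem : ∀ x : V, x ≠ 0 → ∃! U : Submodule F V, U ∈ P ∧ x ∈ U

/-- The members of dimension `k` of a family of subspaces. When `k` is the smallest dimension
occurring in a vector space partition, this is what Heden calls its tail. -/
noncomputable def membersOfFinrank (P : Finset (Submodule F V)) (k : ℕ) :
    Finset (Submodule F V) :=
  {U ∈ P | finrank F U = k}

theorem mem_membersOfFinrank {k : ℕ} {U : Submodule F V} :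
    U ∈ membersOfFinrank P k ↔ U ∈ P ∧ finrank F U = k :=
  Finset.mem_filter

namespace IsVectorSpacePartition

theorem of_forall_exists_finrank_eq {ι : Type*} {d : ι → ℕ} (hd : ∀ i, 0 < d i)
    (htype : ∀ U ∈ P, ∃ i, finrank F U = d i)
    (hP : ∀ x : V, x ≠ 0 → ∃! U : Submodule F V, U ∈ P ∧ x ∈ U) : IsVectorSpacePartition P where
  bot_notMem hbot := by
    obtain ⟨i, hi⟩ := htype ⊥ hbot
    exact (hd i).ne ((finrank_bot F V).symm.trans hi)
  existsUnique_mem := hP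

theorem pairwiseDisjoint (hP : IsVectorSpacePartition P) :
    (P : Set (Submodule F V)).PairwiseDisjoint id := by
  refine fun U hU U' hU' hne ↦ Submodule.disjoint_def.2 fun x hx hx' ↦ ?_
  by_contra hx0
  exact hne ((hP.existsUnique_mem x hx0).unique ⟨hU, hx⟩ ⟨hU', hx'⟩)

theorem sum_ncard_inter (hP : IsVectorSpacePartition P) {S : Set V} (hS : S.Finite)
    (hS0 : 0 ∉ S) : ∑ U ∈ P, (U ∩ S : Set V).ncard = S.ncard := by
  have hdisj : (P : Set (Submodule F V)).PairwiseDisjoint fun U ↦ (U ∩ S : Set V) :=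
    fun U hU U' hU' hne ↦ Set.disjoint_left.2 fun x hx hx' ↦ ne_of_mem_of_not_mem hx.2 hS0
      (Submodule.disjoint_def.1 (hP.pairwiseDisjoint hU hU' hne) x hx.1 hx'.1)
  have hcover : ⋃ U ∈ (P : Set (Submodule F V)), (U ∩ S : Set V) = S := by
    refine (Set.iUnion₂_subset fun _ _ ↦ Set.inter_subset_right).antisymm fun x hx ↦ ?_
    obtain ⟨U, ⟨hU, hxU⟩, -⟩ := hP.existsUnique_mem x (ne_of_mem_of_not_mem hx hS0)
    exact Set.mem_iUnion₂.2 ⟨U, hU, hxU, hx⟩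
  rw [← finsum_mem_coe_finset,
    ← P.finite_toSet.ncard_biUnion (fun _ _ ↦ hS.inter_of_right _) hdisj, hcover]

variable [Finite F] [FiniteDimensional F V]

open scoped Classical in
theorem sum_pow_finrank_not_le_ker (hP : IsVectorSpacePartition P) {f : Dual F V} (hf : f ≠ 0) :
    ∑ U ∈ P with ¬ U ≤ LinearMap.ker f, Nat.card F ^ finrank F U = Nat.card F ^ finrank F V := by
  have : Finite V := Module.finite_of_finite F
  have hempty (U : Submodule F V) (hU : U ≤ LinearMap.ker f) : (U ∩ f ⁻¹' {1} : Set V) = ∅ := by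
    refine Set.eq_empty_of_forall_notMem fun x hx ↦ zero_ne_one (α := F) ?_
    exact (hU hx.1).symm.trans hx.2
  rw [← natCard_mul_ncard_fiber hf 1,
    ← hP.sum_ncard_inter (Set.toFinite (f ⁻¹' {1})) (by simp), Finset.mul_sum, Finset.sum_filter]
  refine Finset.sum_congr rfl fun U _ ↦ ?_
  split_ifs with hU
  · rw [hempty U hU, Set.ncard_empty, mul_zero]
  · exact (natCard_mul_ncard_inter_fiber hU 1).symm

open scoped Classical in
theorem pow_dvd_card_not_le_ker (hP : IsVectorSpacePartition P) {k r : ℕ}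
    (hdim : ∀ U ∈ P, finrank F U = k ∨ k + r ≤ finrank F U) (hV : k + r ≤ finrank F V)
    (f : Dual F V) :
    Nat.card F ^ r ∣ Finset.card {U ∈ membersOfFinrank P k | ¬ U ≤ LinearMap.ker f} := by
  obtain rfl | hf := eq_or_ne f 0
  · simp
  have hsmall : ∑ U ∈ P with ¬ U ≤ LinearMap.ker f ∧ finrank F U = k, Nat.card F ^ finrank F U =
      Finset.card {U ∈ membersOfFinrank P k | ¬ U ≤ LinearMap.ker f} * Nat.card F ^ k := by
    rw [membersOfFinrank, Finset.filter_filter]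
    simp only [and_comm]
    rw [Finset.sum_congr rfl fun U hU ↦ by rw [(Finset.mem_filter.1 hU).2.1], Finset.sum_const,
      smul_eq_mul]
  have hlarge : Nat.card F ^ (k + r) ∣
      ∑ U ∈ P with ¬ U ≤ LinearMap.ker f ∧ finrank F U ≠ k, Nat.card F ^ finrank F U := by
    refine Finset.dvd_sum fun U hU ↦ pow_dvd_pow _ ?_
    obtain ⟨hUP, -, hUk⟩ := Finset.mem_filter.1 hU
    exact (hdim U hUP).resolve_left hUk
  have htotal := hP.sum_pow_finrank_not_le_ker hf
  rw [← Finset.sum_filter_add_sum_filter_not _ (fun U : Submodule F V ↦ finrank F U = k),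
    Finset.filter_filter, Finset.filter_filter, hsmall] at htotal
  have hdvd := (Nat.dvd_add_left hlarge).1 (htotal ▸ pow_dvd_pow (Nat.card F) hV)
  rw [add_comm, pow_add] at hdvd
  exact Nat.dvd_of_mul_dvd_mul_right (pow_pos Nat.card_pos k) hdvd

theorem dvd_and_card_eq_or_lt_card (hP : IsVectorSpacePartition P) {k r : ℕ}
    (hdim : ∀ U ∈ P, finrank F U = k ∨ k + r ≤ finrank F U) (hV : k + r ≤ finrank F V)
    (hndvd : ¬ Nat.card F ^ r ∣ (membersOfFinrank P k).card) :
    (k ∣ k + r ∧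
        (membersOfFinrank P k).card = (Nat.card F ^ (k + r) - 1) / (Nat.card F ^ k - 1)) ∨
      2 * Nat.card F ^ r < (membersOfFinrank P k).card := by
  rw [or_iff_not_imp_right, not_lt]
  intro hle
  have hlt := hle.lt_of_ne fun h ↦ hndvd (h ▸ Dvd.intro_left 2 rfl)
  have hne : (membersOfFinrank P k).Nonempty :=
    Finset.card_ne_zero.1 fun h ↦ hndvd (h ▸ dvd_zero _)
  have hk0 : k ≠ 0 := by
    rintro rfl
    obtain ⟨U, hU⟩ := hne
    obtain ⟨hUP, hU0⟩ := mem_membersOfFinrank.1 hU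
    exact hP.bot_notMem (Submodule.finrank_eq_zero.1 hU0 ▸ hUP)
  have hcard := card_mul_pow_sub_one_eq_of_card_lt hne hk0
    (fun U hU ↦ (mem_membersOfFinrank.1 hU).2)
    (hP.pairwiseDisjoint.subset (Finset.coe_subset.2 (Finset.filter_subset _ _)))
    (hP.pow_dvd_card_not_le_ker hdim hV) hlt
  have hpos : 0 < Nat.card F ^ k - 1 := Nat.sub_pos_of_lt (Nat.one_lt_pow hk0 Finite.one_lt_card)
  exact ⟨dvd_of_pow_sub_one_dvd_pow_sub_one Finite.one_lt_card (Dvd.intro_left _ hcard),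
    Nat.eq_div_of_mul_eq_left hpos.ne' hcard⟩

end IsVectorSpacePartition

end Partition

theorem heden_tail_ii_general {F V : Type*} [Field F] [Finite F] [AddCommGroup V] [Module F V]
    [FiniteDimensional F V] {q l : ℕ} (hq : q = Nat.card F) (hl : 2 ≤ l) {d u : Fin l → ℕ}
    (hd : StrictMono d) (hu2 : 0 < u ⟨1, by omega⟩) {P : Finset (Submodule F V)}
    (hP : IsVectorSpacePartition P) (htype : ∀ U ∈ P, ∃ i : Fin l, finrank F U = d i)
    (hcount : ∀ i : Fin l, u i = {U : Submodule F V | U ∈ P ∧ finrank F U = d i}.ncard)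
    (hndvd : ¬ q ^ (d ⟨1, by omega⟩ - d ⟨0, by omega⟩) ∣ u ⟨0, by omega⟩) :
    (d ⟨0, by omega⟩ ∣ d ⟨1, by omega⟩ ∧
      u ⟨0, by omega⟩ = (q ^ d ⟨1, by omega⟩ - 1) / (q ^ d ⟨0, by omega⟩ - 1)) ∨
    2 * q ^ (d ⟨1, by omega⟩ - d ⟨0, by omega⟩) < u ⟨0, by omega⟩ := by
  subst hq
  have hd01 : d ⟨0, by omega⟩ + (d ⟨1, by omega⟩ - d ⟨0, by omega⟩) = d ⟨1, by omega⟩ :=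
    Nat.add_sub_cancel' (hd.monotone (Fin.mk_le_mk.2 zero_le_one))
  have hcard (i : Fin l) : u i = (membersOfFinrank P (d i)).card := by
    rw [hcount, ← Set.ncard_coe_finset, membersOfFinrank, Finset.coe_filter]
  have hdim (U : Submodule F V) (hU : U ∈ P) :
      finrank F U = d ⟨0, by omega⟩ ∨ d ⟨1, by omega⟩ ≤ finrank F U := by
    obtain ⟨⟨_ | i, hi⟩, hUi⟩ := htype U hU
    · exact .inl hUi
    · exact .inr (hUi ▸ hd.monotone (Fin.mk_le_mk.2 (by omega)))
  have hV : d ⟨1, by omega⟩ ≤ finrank F V := by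
    obtain ⟨U, hU⟩ := Finset.card_pos.1 (hcard _ ▸ hu2)
    exact (mem_membersOfFinrank.1 hU).2 ▸ Submodule.finrank_le U
  have hmain := hP.dvd_and_card_eq_or_lt_card (by rwa [hd01]) (by rwa [hd01]) (hcard _ ▸ hndvd)
  rwa [hd01, ← hcard] at hmain

/-- Heden Theorem 1(ii): if `q^{d_2-d_1} ∤ u_1` and `d_2 ≥ 2d_1`, then either `d_1 ∣ d_2`
and `u_1 = (q^{d_2}-1)/(q^{d_1}-1)`, or `u_1 > 2q^{d_2-d_1}`. Here `d 0 = d_1`, `d 1 = d_2`. -/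
theorem heden_tail_ii
    {F : Type} [Field F] [Fintype F] (q v l : ℕ)
    (hq : q = Fintype.card F) (hl : 2 ≤ l)
    (d u : Fin l → ℕ) (hd : StrictMono d) (hd1 : 1 ≤ d ⟨0, by omega⟩)
    (hu1 : 0 < u ⟨0, by omega⟩) (hu2 : 0 < u ⟨1, by omega⟩)
    (P : Finset (Submodule F (Fin v → F)))
    (hpart : ∀ x : Fin v → F, x ≠ 0 →
      ∃! U : Submodule F (Fin v → F), U ∈ P ∧ x ∈ U)
    (htype : ∀ U ∈ P, ∃ i : Fin l, Module.finrank F ↥U = d i)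
    (hcount : ∀ i : Fin l, u i = Set.ncard
      {U : Submodule F (Fin v → F) | U ∈ P ∧ Module.finrank F ↥U = d i})
    (hndvd : ¬ q ^ (d ⟨1, by omega⟩ - d ⟨0, by omega⟩) ∣ u ⟨0, by omega⟩)
    (hcase : 2 * d ⟨0, by omega⟩ ≤ d ⟨1, by omega⟩) :
    (d ⟨0, by omega⟩ ∣ d ⟨1, by omega⟩ ∧
      u ⟨0, by omega⟩ = (q ^ d ⟨1, by omega⟩ - 1) / (q ^ d ⟨0, by omega⟩ - 1)) ∨
    2 * q ^ (d ⟨1, by omega⟩ - d ⟨0, by omega⟩) < u ⟨0, by omega⟩ :=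
  heden_tail_ii_general (hq.trans Nat.card_eq_fintype_card.symm) hl hd hu2
    (.of_forall_exists_finrank_eq (fun _ ↦ hd1.trans (hd.monotone (Nat.zero_le _))) htype hpart)
    htype hcount hndvd
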